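/- Let k be a field, Σ and Γ k-algebras, M a left Σ-module and N a left Γ-module. If pd_Σ M and pd_Γ N are both finite, then the (Σ ⊗_k Γ)-module M ⊗_k N has finite projective dimension, and pd_{Σ⊗_kΓ}(M ⊗_k N) ≤ pd_Σ M + pd_Γ N. -/

import Mathlib

/-!
Two dimension shifts along free presentations replace the total complex of two projective
resolutions. If `P` is projective over `S` and `Q` over `G`, then `P ⊗[k] Q` is a direct summand
of `(ι →₀ S) ⊗[k] (κ →₀ G) ≃ (ι × κ →₀ S ⊗[k] G)`, hence projective (`projective_tensor`).
Since `k` is a field, tensoring over `k` preserves short exact sequences. Tensoring a sequence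
`0 → K → F → N → 0`, with `F` free, by a projective `P` therefore gives `pd (P ⊗ N) ≤ pd N` by
induction on the bound for `pd N` (`hasProjectiveDimensionLE_tensor_of_projective`). Tensoring
`0 → K → F → M → 0` by `N` bounds `pd (M ⊗ N)` by `m + n`, by induction on `m`: for `m > 0`,
`pd (K ⊗ N) ≤ (m - 1) + n` and `pd (F ⊗ N) ≤ n` (`hasProjectiveDimensionLE_tensor`).
-/

/-!
STATEMENT 9: Let `k` be a field, `Σ` and `Γ` `k`-algebras, `M` a left `Σ`-module and `N`
a left `Γ`-module.  If `pd_Σ M` and `pd_Γ N` are both finite, then the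
`(Σ ⊗[k] Γ)`-module `M ⊗[k] N` has finite projective dimension, and
`pd_{Σ⊗Γ}(M ⊗ N) ≤ pd_Σ M + pd_Γ N`.

`pd X ≤ n` is expressed by the vanishing of `Ext^i(X, -)` for `i > n` (so the statement
"if `pd M ≤ m` and `pd N ≤ n` then `pd (M ⊗ N) ≤ m + n`" captures both the finiteness
assertion and the inequality).  The `(Σ ⊗[k] Γ)`-module structure on `M ⊗[k] N` is given
by `(σ ⊗ γ) • (m ⊗ n) = σm ⊗ γn`.
-/

open CategoryTheory TensorProduct

universe w u

/-- `X` has projective dimension at most `n`: `Ext^i(X, -) = 0` for `i > n`. -/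
def pdLE {R : Type u} [Ring R] [HasExt.{w} (ModuleCat.{u} R)]
    (X : ModuleCat.{u} R) (n : ℕ) : Prop :=
  ∀ (i : ℕ), n < i → ∀ (Y : ModuleCat.{u} R), Subsingleton (Abelian.Ext X Y i)

variable {k : Type u} [Field k]
  {S : Type u} [Ring S] [Algebra k S] {G : Type u} [Ring G] [Algebra k G]
  {M : Type u} [AddCommGroup M] [Module S M] [Module k M] [IsScalarTower k S M]
  {N : Type u} [AddCommGroup N] [Module G N] [Module k N] [IsScalarTower k G N]

/-- The `(Σ ⊗[k] Γ)`-module structure on `M ⊗[k] N`, via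
`(σ ⊗ γ) • (m ⊗ n) = σm ⊗ γn`. -/
noncomputable instance tensorTensorModule : Module (S ⊗[k] G) (M ⊗[k] N) :=
  Module.compHom (M ⊗[k] N)
    ((Module.endTensorEndAlgHom (R := k) (S := k) (A := k)
        (M := M) (N := N)).comp
      (Algebra.TensorProduct.map
        ((Algebra.lsmul k k M : S →ₐ[k] Module.End k M))
        ((Algebra.lsmul k k N : G →ₐ[k] Module.End k N)))).toRingHom

section Preliminaries

variable {R : Type u} [Ring R]

theorem hasProjectiveDimensionLE_iff_pdLE [HasExt.{w} (ModuleCat.{u} R)]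
    (X : ModuleCat.{u} R) (n : ℕ) : HasProjectiveDimensionLE X n ↔ pdLE.{w} X n := by
  refine (hasProjectiveDimensionLT_iff.{w} X (n + 1)).trans ?_
  constructor
  · intro h i hi Y
    exact subsingleton_of_forall_eq 0 (fun e => h i hi e)
  · intro h i hi Y e
    have := h i hi Y
    exact Subsingleton.elim _ _

theorem shortExact_of_linearMap {A B C : Type u} [AddCommGroup A] [Module R A]
    [AddCommGroup B] [Module R B] [AddCommGroup C] [Module R C]
    (f : A →ₗ[R] B) (g : B →ₗ[R] C) (hf : Function.Injective f)
    (hfg : Function.Exact f g) (hg : Function.Surjective g) :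
    (ShortComplex.mk (ModuleCat.ofHom f) (ModuleCat.ofHom g)
      (by ext x; exact hfg.apply_apply_eq_zero x)).ShortExact where
  exact := (ShortComplex.ShortExact.moduleCat_exact_iff_function_exact _).2 hfg
  mono_f := (ModuleCat.mono_iff_injective _).2 hf
  epi_g := (ModuleCat.epi_iff_surjective _).2 hg

/-- Stated for an additive equivalence so that, for `R = S ⊗[k] G`, the codomain carries the
regular action of `R`; on `S ⊗[k] G` itself, instance search would also find
`tensorTensorModule`. -/
theorem projective_of_addEquiv_finsupp {A ι : Type u} [AddCommGroup A] [Module R A]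
    (e : A ≃+ (ι →₀ R)) (he : ∀ (r : R) (a : A), e (r • a) = r • e a) :
    Module.Projective R A :=
  Module.Projective.of_equiv
    ({ e with map_smul' := he } : A ≃ₗ[R] (ι →₀ R)).symm

end Preliminaries

section Tensor

theorem tmul_smul_tmul_eq (s : S) (g : G) (x : M) (y : N) :
    (s ⊗ₜ[k] g : S ⊗[k] G) • (x ⊗ₜ[k] y : M ⊗[k] N) = (s • x) ⊗ₜ[k] (g • y) := rfl

/-- Linearity over `S ⊗[k] G` of an additive map out of `M ⊗[k] N` may be checked on pure
tensors, both of scalars and of elements. -/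
theorem map_smul_of_tmul {A : Type*} [AddCommGroup A] [Module (S ⊗[k] G) A]
    (f : M ⊗[k] N →+ A)
    (hf : ∀ (s : S) (g : G) (x : M) (y : N),
      f ((s • x) ⊗ₜ[k] (g • y)) = (s ⊗ₜ[k] g : S ⊗[k] G) • f (x ⊗ₜ[k] y))
    (r : S ⊗[k] G) (a : M ⊗[k] N) : f (r • a) = r • f a := by
  induction r using TensorProduct.induction_on with
  | zero => simp
  | add r r' hr hr' => simp only [add_smul, map_add, hr, hr']
  | tmul s g =>
    induction a using TensorProduct.induction_on with
    | zero => simp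
    | add a b ha hb => simp only [smul_add, map_add, ha, hb]
    | tmul x y => rw [tmul_smul_tmul_eq, hf]

variable {M' : Type u} [AddCommGroup M'] [Module S M'] [Module k M'] [IsScalarTower k S M']
  {N' : Type u} [AddCommGroup N'] [Module G N'] [Module k N'] [IsScalarTower k G N']

/-- For `f` linear over `S` and `g` linear over `G`, the map `f ⊗ g` over `k`, which is
linear over `S ⊗[k] G`. -/
noncomputable def tensorMap (f : M →ₗ[S] M') (g : N →ₗ[G] N') :
    M ⊗[k] N →ₗ[S ⊗[k] G] M' ⊗[k] N' where
  toFun := TensorProduct.map (f.restrictScalars k) (g.restrictScalars k)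
  map_add' := map_add _
  map_smul' := map_smul_of_tmul
    (TensorProduct.map (f.restrictScalars k) (g.restrictScalars k)).toAddMonoidHom
    (fun s t x y => by
      simp [tmul_smul_tmul_eq])

theorem projective_finsupp_tensor (ι κ : Type u) :
    Module.Projective (S ⊗[k] G) ((ι →₀ S) ⊗[k] (κ →₀ G)) := by
  let e : (ι →₀ S) ⊗[k] (κ →₀ G) ≃+ (ι × κ →₀ S ⊗[k] G) :=
    (finsuppTensorFinsupp k k S G ι κ).toAddEquiv
  refine projective_of_addEquiv_finsupp (R := S ⊗[k] G) (A := (ι →₀ S) ⊗[k] (κ →₀ G)) e ?_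
  refine map_smul_of_tmul (S := S) (G := G) (M := ι →₀ S) (N := κ →₀ G) e.toAddMonoidHom ?_
  intro s t x y
  ext ⟨i, j⟩
  have he (a : ι →₀ S) (b : κ →₀ G) : e (a ⊗ₜ[k] b) (i, j) = a i ⊗ₜ[k] b j :=
    finsuppTensorFinsupp_apply k k S G ι κ a b i j
  simp [he]

/-- Splittings of the surjections `(M →₀ S) → M` and `(N →₀ G) → N` tensor to a splitting over
`S ⊗[k] G`, so `M ⊗[k] N` is a direct summand of a free module. -/
theorem projective_tensor (hM : Module.Projective S M) (hN : Module.Projective G N) :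
    Module.Projective (S ⊗[k] G) (M ⊗[k] N) := by
  obtain ⟨s, hs⟩ := hM.out
  obtain ⟨t, ht⟩ := hN.out
  have := projective_finsupp_tensor (k := k) (S := S) (G := G) M N
  refine Module.Projective.of_split (tensorMap s t)
    (tensorMap (Finsupp.linearCombination S id) (Finsupp.linearCombination G id)) ?_
  refine LinearMap.ext fun a => ?_
  induction a using TensorProduct.induction_on with
  | zero => simp
  | add a b ha hb => rw [map_add, ha, hb, map_add]
  | tmul x y =>
    change Finsupp.linearCombination S id (s x) ⊗ₜ[k] Finsupp.linearCombination G id (t y)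
      = x ⊗ₜ[k] y
    rw [hs x, ht y]

end Tensor

section Dimension

/-- The presentation of `X` by the free module on its elements. Existential quantification over
the modules `K` and `F` hides that they are a submodule and a type of finitely supported functions:
`tensorTensorModule` expects additive structures coming from `AddCommGroup`, which instance search
does not recognise on `LinearMap.ker`. -/
theorem exists_projective_presentation (k : Type u) [Field k] {R : Type u} [Ring R] [Algebra k R]
    (X : Type u) [AddCommGroup X] [Module R X] :
    ∃ (K F : Type u) (_ : AddCommGroup K) (_ : Module R K) (_ : Module k K)
      (_ : IsScalarTower k R K) (_ : AddCommGroup F) (_ : Module R F) (_ : Module k F)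
      (_ : IsScalarTower k R F) (i : K →ₗ[R] F) (p : F →ₗ[R] X),
      Module.Projective R F ∧ Function.Injective i ∧ Function.Exact i p ∧
        Function.Surjective p :=
  let p : (X →₀ R) →ₗ[R] X := Finsupp.linearCombination R id
  ⟨LinearMap.ker p, X →₀ R, inferInstance, inferInstance, inferInstance, inferInstance,
    inferInstance, inferInstance, inferInstance, inferInstance, (LinearMap.ker p).subtype, p,
    inferInstance, Submodule.injective_subtype _, LinearMap.exact_subtype_ker_map p,
    Finsupp.linearCombination_id_surjective R X⟩

/-- The case of a projective `M`, by dimension shifting in `N`: tensoring with `M` turns a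
projective presentation of `N` into one of `M ⊗[k] N`. -/
theorem hasProjectiveDimensionLE_tensor_of_projective (hM : Module.Projective S M) (n : ℕ) :
    ∀ {N : Type u} [AddCommGroup N] [Module G N] [Module k N] [IsScalarTower k G N],
      HasProjectiveDimensionLE (ModuleCat.of G N) n →
      HasProjectiveDimensionLE (ModuleCat.of (S ⊗[k] G) (M ⊗[k] N)) n := by
  induction n with
  | zero =>
    intro N _ _ _ _ hN
    rw [← projective_iff_hasProjectiveDimensionLE_zero, ← IsProjective.iff_projective] at hN ⊢
    exact projective_tensor hM hN
  | succ n ih =>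
    intro N _ _ _ _ hN
    obtain ⟨K, F, _, _, _, _, _, _, _, _, i, p, hF, hi, hip, hp⟩ :=
      exists_projective_presentation k (R := G) N
    have hK : HasProjectiveDimensionLE (ModuleCat.of G K) n :=
      ((shortExact_of_linearMap i p hi hip hp).hasProjectiveDimensionLT_X₃_iff n
        ((IsProjective.iff_projective (R := G) F).1 hF)).1 hN
    refine ((shortExact_of_linearMap
      (tensorMap (k := k) (LinearMap.id : M →ₗ[S] M) i)
      (tensorMap (k := k) (LinearMap.id : M →ₗ[S] M) p) ?_ ?_ ?_
        ).hasProjectiveDimensionLT_X₃_iff n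
          ((IsProjective.iff_projective (R := S ⊗[k] G) (M ⊗[k] F)).1
            (projective_tensor hM hF))).2 (ih hK)
    · exact Module.Flat.lTensor_preserves_injective_linearMap (M := M) (i.restrictScalars k) hi
    · have hip' : Function.Exact (i.restrictScalars k) (p.restrictScalars k) := hip
      exact lTensor_exact M hip' hp
    · exact LinearMap.lTensor_surjective M (g := p.restrictScalars k) hp

/-- Dimension shifting in `M`. The middle term `F ⊗[k] N` is no longer projective, but has
dimension at most `n`, which suffices to bound the dimension of the quotient. -/
theorem hasProjectiveDimensionLE_tensor (m n : ℕ)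
    (hN : HasProjectiveDimensionLE (ModuleCat.of G N) n) :
    ∀ {M : Type u} [AddCommGroup M] [Module S M] [Module k M] [IsScalarTower k S M],
      HasProjectiveDimensionLE (ModuleCat.of S M) m →
      HasProjectiveDimensionLE (ModuleCat.of (S ⊗[k] G) (M ⊗[k] N)) (m + n) := by
  induction m with
  | zero =>
    intro M _ _ _ _ hM
    rw [← projective_iff_hasProjectiveDimensionLE_zero, ← IsProjective.iff_projective] at hM
    rw [zero_add]
    exact hasProjectiveDimensionLE_tensor_of_projective hM n hN
  | succ m ih =>
    intro M _ _ _ _ hM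
    obtain ⟨K, F, _, _, _, _, _, _, _, _, i, p, hF, hi, hip, hp⟩ :=
      exists_projective_presentation k (R := S) M
    have hK : HasProjectiveDimensionLE (ModuleCat.of S K) m :=
      ((shortExact_of_linearMap i p hi hip hp).hasProjectiveDimensionLT_X₃_iff m
        ((IsProjective.iff_projective (R := S) F).1 hF)).1 hM
    have hFN : HasProjectiveDimensionLE (ModuleCat.of (S ⊗[k] G) (F ⊗[k] N)) n :=
      hasProjectiveDimensionLE_tensor_of_projective hF n hN
    rw [Nat.add_right_comm]
    refine (shortExact_of_linearMap
      (tensorMap (k := k) i (LinearMap.id : N →ₗ[G] N))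
      (tensorMap (k := k) p (LinearMap.id : N →ₗ[G] N)) ?_ ?_ ?_
        ).hasProjectiveDimensionLT_X₃ (m + n + 1) (ih hK)
          (hasProjectiveDimensionLT_of_ge _ (n + 1) _ (by lia))
    · exact Module.Flat.rTensor_preserves_injective_linearMap (M := N) (i.restrictScalars k) hi
    · have hip' : Function.Exact (i.restrictScalars k) (p.restrictScalars k) := hip
      exact rTensor_exact N hip' hp
    · exact LinearMap.rTensor_surjective N (g := p.restrictScalars k) hp

end Dimension

theorem stmt_9 [HasExt.{w} (ModuleCat.{u} S)] [HasExt.{w} (ModuleCat.{u} G)]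
    [HasExt.{w} (ModuleCat.{u} (S ⊗[k] G))]
    (m n : ℕ)
    (hM : pdLE.{w} (ModuleCat.of S M) m) (hN : pdLE.{w} (ModuleCat.of G N) n) :
    pdLE.{w} (ModuleCat.of (S ⊗[k] G) (M ⊗[k] N)) (m + n) := by
  rw [← hasProjectiveDimensionLE_iff_pdLE] at hM hN ⊢
  exact hasProjectiveDimensionLE_tensor m n hN hM
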